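/- arXiv:1711.06959 — 7 statements merged into one kernel-verified Lean document; each statement's English description precedes it below -/
import Mathlib

section
/- (Theorem 1, Lower & Upper Bounds.) Let X ⊆ ℝ^d be nonempty, let f : ℝ^d → ℝ be Lipschitz continuous with constant L > 0 and nonnegative on X, let 0 ≤ ρ < 1, let x_1, …, x_t ∈ X, and let f* = inf_{x ∈ X} f(x). If X is entirely covered by the removable parameter space, i.e., X ⊆ ⋃_{j=1,…,t} B(x_j, r_j) where r_j = (f(x_j) − ρ·min_{i=1,…,t} f(x_i))/L, then ρ·min_{i=1,…,t} f(x_i) ≤ f* ≤ min_{i=1,…,t} f(x_i). -/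
section RemovableBalls

variable {E ι : Type*} [PseudoMetricSpace E] {X : Set E} {f : E → ℝ} {K : NNReal} {c : ℝ}

theorem lt_of_mem_ball_of_lipschitzOnWith (hf : LipschitzOnWith K f X) (hK : 0 < K) {a y : E}
    (ha : a ∈ X) (hy : y ∈ X) (hya : y ∈ Metric.ball a ((f a - c) / K)) : c < f y := by
  have hdist : K * dist a y < f a - c := by
    rwa [Metric.mem_ball', lt_div_iff₀' (NNReal.coe_pos.mpr hK)] at hya
  linarith [hf.le_add_mul ha hy]

theorem mem_lowerBounds_image_of_subset_biUnion_ball (hf : LipschitzOnWith K f X) (hK : 0 < K)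
    {s : Set ι} {x : ι → E} (hx : Set.MapsTo x s X)
    (hcover : X ⊆ ⋃ j ∈ s, Metric.ball (x j) ((f (x j) - c) / K)) :
    c ∈ lowerBounds (f '' X) := by
  rintro _ ⟨y, hy, rfl⟩
  obtain ⟨j, hj, hyj⟩ := Set.mem_iUnion₂.mp (hcover hy)
  exact (lt_of_mem_ball_of_lipschitzOnWith hf hK (hx hj) hy hyj).le

end RemovableBalls

theorem csInf_image_le_inf' {E ι α : Type*} [ConditionallyCompleteLattice α] {X : Set E}
    {f : E → α} (hbdd : BddBelow (f '' X)) {s : Finset ι} (hs : s.Nonempty) {x : ι → E}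
    (hx : Set.MapsTo x s X) : sInf (f '' X) ≤ s.inf' hs fun i => f (x i) :=
  Finset.le_inf' hs _ fun _ hi => csInf_le hbdd (Set.mem_image_of_mem f (hx hi))

theorem bpgrad_lower_upper_bounds_general {E ι : Type*} [PseudoMetricSpace E] {X : Set E}
    {f : E → ℝ} {K : NNReal} (hf : LipschitzOnWith K f X) (hK : 0 < K) {c : ℝ}
    {s : Finset ι} (hs : s.Nonempty) {x : ι → E} (hx : Set.MapsTo x s X)
    (hcover : X ⊆ ⋃ j ∈ s, Metric.ball (x j) ((f (x j) - c) / K)) :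
    c ≤ sInf (f '' X) ∧ sInf (f '' X) ≤ s.inf' hs fun i => f (x i) := by
  have hc : c ∈ lowerBounds (f '' X) := mem_lowerBounds_image_of_subset_biUnion_ball hf hK hx hcover
  have hX : X.Nonempty := hs.elim fun i hi => ⟨x i, hx hi⟩
  exact ⟨le_csInf (hX.image f) hc, csInf_image_le_inf' ⟨c, hc⟩ hs hx⟩

/-- Theorem 1, Lower & Upper Bounds: Let `X ⊆ ℝ^d` be nonempty,
`f` Lipschitz with constant `L > 0` and nonnegative on `X`, `0 ≤ ρ < 1`,
samples `x_1, …, x_t ∈ X` (1-indexed), `m = min_{i=1,…,t} f(x_i)`, and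
`f* = inf_{x ∈ X} f(x)`. If `X ⊆ ⋃_{j=1,…,t} B(x_j, r_j)` with
`r_j = (f(x_j) − ρ·m)/L`, then `ρ·m ≤ f* ≤ m`. -/
theorem bpgrad_lower_upper_bounds
    {d : ℕ} (X : Set (EuclideanSpace ℝ (Fin d))) (hX : X.Nonempty)
    (f : EuclideanSpace ℝ (Fin d) → ℝ) (L : ℝ) (hL : 0 < L)
    (hf : ∀ x y : EuclideanSpace ℝ (Fin d), |f x - f y| ≤ L * ‖x - y‖)
    (hf0 : ∀ x ∈ X, 0 ≤ f x)
    (ρ : ℝ) (hρ0 : 0 ≤ ρ) (hρ1 : ρ < 1)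
    (t : ℕ) (ht : 1 ≤ t) (x : ℕ → EuclideanSpace ℝ (Fin d))
    (hxX : ∀ i, 1 ≤ i → i ≤ t → x i ∈ X)
    (m : ℝ) (hm : m = (Finset.Icc 1 t).inf' (Finset.nonempty_Icc.mpr ht) fun i => f (x i))
    (fstar : ℝ) (hfstar : fstar = sInf (f '' X))
    (hcover : X ⊆ ⋃ j ∈ Finset.Icc 1 t, Metric.ball (x j) ((f (x j) - ρ * m) / L)) :
    ρ * m ≤ fstar ∧ fstar ≤ m := by
  lift L to NNReal using hL.le
  subst hm hfstar
  have hlip : LipschitzWith L f := .of_dist_le_mul fun y z => by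
    simpa only [Real.dist_eq, dist_eq_norm_sub y z] using hf y z
  exact bpgrad_lower_upper_bounds_general hlip.lipschitzOnWith (NNReal.coe_pos.mp hL) _
    (fun i hi => (Finset.mem_Icc.mp hi).elim (hxX i)) hcover
end

section
/- (Corollary, Approximation Error Bound.) Let X ⊆ ℝ^d be nonempty, let f : ℝ^d → ℝ be Lipschitz continuous with constant L > 0 and nonnegative on X, let 0 ≤ ρ < 1, let ε ≥ 0, let x_1, …, x_t ∈ X, and let f* = inf_{x ∈ X} f(x). Suppose both (i) min_{i=1,…,t} f(x_i) ≤ ε/(1 − ρ), and (ii) X ⊆ ⋃_{j=1,…,t} B(x_j, r_j) where r_j = (f(x_j) − ρ·min_{i=1,…,t} f(x_i))/L. Then min_{i=1,…,t} f(x_i) − f* ≤ ε. -/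
section PseudoMetricSpace

variable {E : Type*} {ι : Sort*} [PseudoMetricSpace E] {f : E → ℝ} {L : ℝ}

theorem lt_of_mem_ball_sub_div {a y : E} {c : ℝ} (hL : 0 < L)
    (hf : f a - f y ≤ L * dist a y) (hy : y ∈ Metric.ball a ((f a - c) / L)) : c < f y := by
  have hdist : L * dist a y < f a - c := (lt_div_iff₀' hL).mp (Metric.mem_ball'.mp hy)
  linarith

theorem le_sInf_image_of_subset_iUnion_ball {X : Set E} {x : ι → E} {c : ℝ} (hX : X.Nonempty)
    (hL : 0 < L) (hf : ∀ i, ∀ y ∈ X, f (x i) - f y ≤ L * dist (x i) y)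
    (hcover : X ⊆ ⋃ i, Metric.ball (x i) ((f (x i) - c) / L)) : c ≤ sInf (f '' X) := by
  refine le_csInf (hX.image f) (Set.forall_mem_image.mpr fun y hy => ?_)
  obtain ⟨i, hyi⟩ := Set.mem_iUnion.mp (hcover hy)
  exact (lt_of_mem_ball_sub_div hL (hf i y hy) hyi).le

theorem bpgrad_approximation_error_bound_general {X : Set E} {x : ι → E} {ρ ε m : ℝ}
    (hX : X.Nonempty) (hL : 0 < L) (hf : ∀ i, ∀ y ∈ X, f (x i) - f y ≤ L * dist (x i) y)
    (hρ : ρ < 1) (hm : m ≤ ε / (1 - ρ))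
    (hcover : X ⊆ ⋃ i, Metric.ball (x i) ((f (x i) - ρ * m) / L)) :
    m - sInf (f '' X) ≤ ε :=
  calc m - sInf (f '' X)
      ≤ m - ρ * m := sub_le_sub_left (le_sInf_image_of_subset_iUnion_ball hX hL hf hcover) m
    _ = m * (1 - ρ) := by ring
    _ ≤ ε := (le_div_iff₀ (sub_pos.mpr hρ)).mp hm

end PseudoMetricSpace

/-- Corollary, Approximation Error Bound: Let `X ⊆ ℝ^d` be nonempty,
`f` Lipschitz with constant `L > 0` and nonnegative on `X`, `0 ≤ ρ < 1`, `ε ≥ 0`,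
samples `x_1, …, x_t ∈ X` (1-indexed), `m = min_{i=1,…,t} f(x_i)`, and
`f* = inf_{x ∈ X} f(x)`. If (i) `m ≤ ε/(1 − ρ)` and (ii) `X ⊆ ⋃_{j=1,…,t} B(x_j, r_j)`
with `r_j = (f(x_j) − ρ·m)/L`, then `m − f* ≤ ε`. -/
theorem bpgrad_approximation_error_bound
    {d : ℕ} (X : Set (EuclideanSpace ℝ (Fin d))) (hX : X.Nonempty)
    (f : EuclideanSpace ℝ (Fin d) → ℝ) (L : ℝ) (hL : 0 < L)
    (hf : ∀ x y : EuclideanSpace ℝ (Fin d), |f x - f y| ≤ L * ‖x - y‖)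
    (hf0 : ∀ x ∈ X, 0 ≤ f x)
    (ρ : ℝ) (hρ0 : 0 ≤ ρ) (hρ1 : ρ < 1) (ε : ℝ) (hε : 0 ≤ ε)
    (t : ℕ) (ht : 1 ≤ t) (x : ℕ → EuclideanSpace ℝ (Fin d))
    (hxX : ∀ i, 1 ≤ i → i ≤ t → x i ∈ X)
    (m : ℝ) (hm : m = (Finset.Icc 1 t).inf' (Finset.nonempty_Icc.mpr ht) fun i => f (x i))
    (fstar : ℝ) (hfstar : fstar = sInf (f '' X))
    (hub : m ≤ ε / (1 - ρ))
    (hcover : X ⊆ ⋃ j ∈ Finset.Icc 1 t, Metric.ball (x j) ((f (x j) - ρ * m) / L)) :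
    m - fstar ≤ ε :=
  hfstar ▸ bpgrad_approximation_error_bound_general hX hL
    (fun i y _ => dist_eq_norm (x i) y ▸ (le_abs_self _).trans (hf (x i) y)) hρ1 hub
    (hcover.trans (Set.iUnion₂_subset_iUnion _ _))
end

section
/- (Separation of samples, key step of Theorem 2.) Let f : ℝ^d → ℝ be nonnegative and let L > 0, 0 ≤ ρ < 1. Let x_1, …, x_T ∈ ℝ^d (T ≥ 2) be samples satisfying the sampling rule: for every t with 1 ≤ t ≤ T − 1, max_{i=1,…,t} { f(x_i) − L·‖x_i − x_{t+1}‖ } ≤ ρ·min_{i=1,…,t} f(x_i). Set f_min = min_{i=1,…,T} f(x_i). Then for all 1 ≤ j ≤ t ≤ T − 1, one has ‖x_{t+1} − x_j‖ ≥ (1 − ρ)·f_min / L; in particular the samples are pairwise at distance at least (1 − ρ)·f_min / L. -/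
theorem one_sub_mul_div_le_of_sub_mul_le
    {𝕜 : Type*} [Field 𝕜] [LinearOrder 𝕜] [IsStrictOrderedRing 𝕜] {L ρ v m c δ : 𝕜}
    (hL : 0 < L) (hρ0 : 0 ≤ ρ) (hρ1 : ρ ≤ 1) (hm : m ≤ v) (hc : c ≤ v)
    (h : v - L * δ ≤ ρ * m) : (1 - ρ) * c / L ≤ δ := by
  rw [div_le_iff₀' hL]
  calc (1 - ρ) * c ≤ (1 - ρ) * v := mul_le_mul_of_nonneg_left hc (sub_nonneg.mpr hρ1)
    _ = v - ρ * v := by ring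
    _ ≤ v - ρ * m := by gcongr
    _ ≤ L * δ := sub_le_comm.mp h

theorem bpgrad_sample_separation_general
    {X : Type*} [PseudoMetricSpace X] {T : ℕ} (hT : 1 ≤ T) (f : X → ℝ)
    (L ρ : ℝ) (hL : 0 < L) (hρ0 : 0 ≤ ρ) (hρ1 : ρ ≤ 1) (x : ℕ → X)
    (hrule : ∀ t, ∀ ht : 1 ≤ t, t ≤ T - 1 → ∀ i, 1 ≤ i → i ≤ t →
      f (x i) - L * dist (x i) (x (t + 1)) ≤
        ρ * ((Finset.Icc 1 t).inf' (Finset.nonempty_Icc.mpr ht) fun k => f (x k))) :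
    ∀ t, 1 ≤ t → t ≤ T - 1 → ∀ j, 1 ≤ j → j ≤ t →
      (1 - ρ) * ((Finset.Icc 1 T).inf' (Finset.nonempty_Icc.mpr hT) fun i => f (x i)) / L ≤
        dist (x (t + 1)) (x j) := by
  intro t ht htT j hj hjt
  have inf'_le_sample {s : ℕ} (hs : 1 ≤ s) (hjs : j ≤ s) :
      ((Finset.Icc 1 s).inf' (Finset.nonempty_Icc.mpr hs) fun k => f (x k)) ≤ f (x j) :=
    Finset.inf'_le (fun k => f (x k)) (Finset.mem_Icc.mpr ⟨hj, hjs⟩)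
  rw [dist_comm]
  exact one_sub_mul_div_le_of_sub_mul_le hL hρ0 hρ1 (inf'_le_sample ht hjt)
    (inf'_le_sample hT (by omega)) (hrule t ht htT j hj hjt)

/-- Separation of samples, key step of Theorem 2: Let `f : ℝ^d → ℝ`
be nonnegative, `L > 0`, `0 ≤ ρ < 1`, and let `x_1, …, x_T` (1-indexed, `T ≥ 2`)
satisfy the BPGrad sampling rule: for every `1 ≤ t ≤ T − 1` and every `1 ≤ i ≤ t`,
`f(x_i) − L‖x_i − x_{t+1}‖ ≤ ρ·min_{k=1,…,t} f(x_k)`. With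
`f_min = min_{i=1,…,T} f(x_i)`, for all `1 ≤ j ≤ t ≤ T − 1` one has
`‖x_{t+1} − x_j‖ ≥ (1 − ρ)·f_min / L`. -/
theorem bpgrad_sample_separation
    {d T : ℕ} (hT : 2 ≤ T)
    (f : EuclideanSpace ℝ (Fin d) → ℝ) (hf0 : ∀ x, 0 ≤ f x)
    (L ρ : ℝ) (hL : 0 < L) (hρ0 : 0 ≤ ρ) (hρ1 : ρ < 1)
    (x : ℕ → EuclideanSpace ℝ (Fin d))
    (hrule : ∀ t, ∀ ht : 1 ≤ t, t ≤ T - 1 → ∀ i, 1 ≤ i → i ≤ t →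
      f (x i) - L * ‖x i - x (t + 1)‖ ≤
        ρ * ((Finset.Icc 1 t).inf' (Finset.nonempty_Icc.mpr ht) fun k => f (x k)))
    (fmin : ℝ)
    (hfmin : fmin = (Finset.Icc 1 T).inf'
      (Finset.nonempty_Icc.mpr (by omega)) fun i => f (x i)) :
    ∀ t, 1 ≤ t → t ≤ T - 1 → ∀ j, 1 ≤ j → j ≤ t →
      (1 - ρ) * fmin / L ≤ ‖x (t + 1) - x j‖ := by
  simp only [← dist_eq_norm] at hrule ⊢
  exact hfmin ▸ bpgrad_sample_separation_general (by omega) f L ρ hL hρ0 hρ1.le x hrule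
end

section
/- (Theorem 2, Convergence within Finite Samples.) Let d ≥ 1, L > 0, 0 ≤ ρ < 1, let X ⊆ ℝ^d be a measurable set of finite Lebesgue volume V_X, and let f : ℝ^d → ℝ be nonnegative. Suppose x_1, …, x_T ∈ X satisfy the sampling rule: for every t with 1 ≤ t ≤ T − 1, max_{i=1,…,t} { f(x_i) − L·‖x_i − x_{t+1}‖ } ≤ ρ·min_{i=1,…,t} f(x_i). Set f_min = min_{i=1,…,T} f(x_i) and assume f_min > 0 and that the open ball B(x_t, (1−ρ)·f_min/(2L)) is contained in X for each t. Then T ≤ [2L / ((1 − ρ)·f_min)]^d · V_X / C, where C = π^{d/2} / Γ(d/2 + 1). -/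
open MeasureTheory

/-! The sampling rule keeps each new sample at distance at least `(1 - ρ) * fmin / L` from all
earlier ones, so the open balls around the samples whose radius is half that distance are disjoint.
They all lie in `X` and have the same volume, so comparing volumes bounds their number. -/

open Metric Module

section Packing

variable {ι E : Type*} [NormedAddCommGroup E] [MeasurableSpace E] [BorelSpace E]
  {μ : Measure E} [μ.IsAddHaarMeasure] {s : Finset ι} {x : ι → E} {r : ℝ} {X : Set E}

theorem card_mul_measureReal_ball_le_of_separated
    (hsep : (s : Set ι).Pairwise fun i j ↦ 2 * r ≤ dist (x i) (x j))
    (hball : ∀ i ∈ s, ball (x i) r ⊆ X) (hX : μ X ≠ ⊤) :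
    s.card * μ.real (ball 0 r) ≤ μ.real X := by
  have hdisj : (s : Set ι).PairwiseDisjoint fun i ↦ ball (x i) r := fun i hi j hj hij ↦
    ball_disjoint_ball (two_mul r ▸ hsep hi hj hij)
  have hfin : ∀ i ∈ s, μ (ball (x i) r) ≠ ⊤ := fun i hi ↦ measure_ne_top_of_subset (hball i hi) hX
  calc s.card * μ.real (ball 0 r)
      = ∑ i ∈ s, μ.real (ball (x i) r) := by simp [Measure.addHaar_real_ball_center]
    _ = μ.real (⋃ i ∈ s, ball (x i) r) :=
        (measureReal_biUnion_finset hdisj (fun _ _ ↦ measurableSet_ball) hfin).symm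
    _ ≤ μ.real X := measureReal_mono (Set.iUnion₂_subset hball) hX

theorem card_le_measureReal_div_ball_of_separated [NormedSpace ℝ E] [FiniteDimensional ℝ E]
    (hr : 0 < r) (hsep : (s : Set ι).Pairwise fun i j ↦ 2 * r ≤ dist (x i) (x j))
    (hball : ∀ i ∈ s, ball (x i) r ⊆ X) (hX : μ X ≠ ⊤) :
    (s.card : ℝ) ≤ r⁻¹ ^ finrank ℝ E * μ.real X / μ.real (ball 0 1) := by
  have hunit : 0 < μ.real (ball 0 1) :=
    ENNReal.toReal_pos (measure_ball_pos μ 0 one_pos).ne' measure_ball_lt_top.ne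
  have hscale : μ.real (ball 0 r) = r ^ finrank ℝ E * μ.real (ball 0 1) := by
    rw [measureReal_def, Measure.addHaar_ball_of_pos μ 0 hr, ENNReal.toReal_mul,
      ENNReal.toReal_ofReal (by positivity), measureReal_def]
  have hpack := card_mul_measureReal_ball_le_of_separated hsep hball hX
  rw [hscale] at hpack
  rw [le_div_iff₀ hunit, inv_pow, le_inv_mul_iff₀ (by positivity)]
  linarith

end Packing

theorem measureReal_ball_zero_one_euclideanSpace {ι : Type*} [Fintype ι] [Nonempty ι] :
    volume.real (ball (0 : EuclideanSpace ℝ ι) 1) =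
      Real.pi ^ ((Fintype.card ι : ℝ) / 2) / Real.Gamma ((Fintype.card ι : ℝ) / 2 + 1) := by
  have hsqrt : √Real.pi ^ Fintype.card ι = Real.pi ^ ((Fintype.card ι : ℝ) / 2) := by
    rw [Real.sqrt_eq_rpow, ← Real.rpow_mul_natCast Real.pi_pos.le, one_div_mul_eq_div]
  rw [measureReal_def, EuclideanSpace.volume_ball, hsqrt, ENNReal.ofReal_one, one_pow, one_mul,
    ENNReal.toReal_ofReal (by positivity)]

section Sampling

variable {E : Type*} [SeminormedAddCommGroup E] {f : E → ℝ} {L ρ : ℝ} {T : ℕ} {x : ℕ → E}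

/-- The BPGrad sampling rule for the samples `x 1, …, x T` of `f`, which forces them to be separated
in terms of their values. The maximum over the earlier samples on the left-hand side of the rule is
expressed by quantifying over `i`. -/
def IsBPGradSampling (f : E → ℝ) (L ρ : ℝ) (T : ℕ) (x : ℕ → E) : Prop :=
  ∀ t, ∀ ht : 1 ≤ t, t < T → ∀ i, 1 ≤ i → i ≤ t →
    f (x i) - L * ‖x i - x (t + 1)‖ ≤
      ρ * (Finset.Icc 1 t).inf' (Finset.nonempty_Icc.mpr ht) fun k ↦ f (x k)

namespace IsBPGradSampling

theorem le_dist_of_lt (h : IsBPGradSampling f L ρ T x) (hL : 0 < L) (hρ : ρ ≤ 1) {m : ℝ}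
    (hm : ∀ i ∈ Finset.Icc 1 T, m ≤ f (x i)) {i j : ℕ} (hi : 1 ≤ i) (hij : i < j) (hj : j ≤ T) :
    (1 - ρ) * m / L ≤ dist (x i) (x j) := by
  obtain ⟨t, rfl⟩ : ∃ t, j = t + 1 := ⟨j - 1, by lia⟩
  have ht : 1 ≤ t := by lia
  set fmin_t := (Finset.Icc 1 t).inf' (Finset.nonempty_Icc.mpr ht) fun k ↦ f (x k)
  have hrule : f (x i) - L * ‖x i - x (t + 1)‖ ≤ ρ * fmin_t := h t ht (by lia) i hi (by lia)
  have hfmin_t_le : fmin_t ≤ f (x i) := Finset.inf'_le _ (Finset.mem_Icc.mpr ⟨hi, by lia⟩)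
  have hm_le : m ≤ fmin_t :=
    Finset.le_inf' _ _ fun k hk ↦ hm k (Finset.Icc_subset_Icc_right (by lia) hk)
  rw [dist_eq_norm, div_le_iff₀' hL]
  calc (1 - ρ) * m ≤ (1 - ρ) * fmin_t := mul_le_mul_of_nonneg_left hm_le (sub_nonneg.mpr hρ)
    _ ≤ f (x i) - ρ * fmin_t := by linarith
    _ ≤ L * ‖x i - x (t + 1)‖ := by linarith

theorem pairwise_le_dist (h : IsBPGradSampling f L ρ T x) (hL : 0 < L) (hρ : ρ ≤ 1) {m : ℝ}
    (hm : ∀ i ∈ Finset.Icc 1 T, m ≤ f (x i)) :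
    (Finset.Icc 1 T : Set ℕ).Pairwise fun i j ↦ (1 - ρ) * m / L ≤ dist (x i) (x j) := by
  intro i hi j hj hij
  rw [Finset.mem_coe, Finset.mem_Icc] at hi hj
  rcases hij.lt_or_gt with hlt | hgt
  · exact h.le_dist_of_lt hL hρ hm hi.1 hlt hj.2
  · exact dist_comm (x i) (x j) ▸ h.le_dist_of_lt hL hρ hm hj.1 hgt hi.2

end IsBPGradSampling

end Sampling

theorem bpgrad_convergence_within_finite_samples_general
    {E : Type*} [NormedAddCommGroup E] [NormedSpace ℝ E] [FiniteDimensional ℝ E]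
    [MeasurableSpace E] [BorelSpace E] (μ : Measure E) [μ.IsAddHaarMeasure]
    {T : ℕ} (hT : 1 ≤ T) {L ρ : ℝ} (hL : 0 < L) (hρ : ρ < 1) {X : Set E} (hX : μ X ≠ ⊤)
    {f : E → ℝ} {x : ℕ → E} (hrule : IsBPGradSampling f L ρ T x) {fmin : ℝ}
    (hfmin : fmin = (Finset.Icc 1 T).inf' (Finset.nonempty_Icc.mpr hT) fun i ↦ f (x i))
    (hfmin_pos : 0 < fmin)
    (hball : ∀ t ∈ Finset.Icc 1 T, ball (x t) ((1 - ρ) * fmin / (2 * L)) ⊆ X) :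
    (T : ℝ) ≤ (2 * L / ((1 - ρ) * fmin)) ^ finrank ℝ E * μ.real X / μ.real (ball 0 1) := by
  have hradius : 0 < (1 - ρ) * fmin / (2 * L) :=
    div_pos (mul_pos (sub_pos.mpr hρ) hfmin_pos) (by positivity)
  have hfmin_le : ∀ i ∈ Finset.Icc 1 T, fmin ≤ f (x i) := fun i hi ↦ hfmin ▸ Finset.inf'_le _ hi
  have hdiameter : 2 * ((1 - ρ) * fmin / (2 * L)) = (1 - ρ) * fmin / L := by field_simp
  have hsep := hrule.pairwise_le_dist hL hρ.le hfmin_le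
  rw [← hdiameter] at hsep
  simpa only [Nat.card_Icc, Nat.add_sub_cancel, inv_div] using
    card_le_measureReal_div_ball_of_separated hradius hsep hball hX

/-- Theorem 2, Convergence within Finite Samples: Let `d ≥ 1`,
`L > 0`, `0 ≤ ρ < 1`, `X ⊆ ℝ^d` measurable with finite Lebesgue volume, and
`f : ℝ^d → ℝ` nonnegative. Suppose `x_1, …, x_T ∈ X` (1-indexed) satisfy the
BPGrad sampling rule: for every `1 ≤ t ≤ T − 1` and every `1 ≤ i ≤ t`,
`f(x_i) − L‖x_i − x_{t+1}‖ ≤ ρ·min_{k=1,…,t} f(x_k)`. With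
`f_min = min_{i=1,…,T} f(x_i) > 0` and `B(x_t, (1−ρ)·f_min/(2L)) ⊆ X` for each `t`,
one has `T ≤ [2L/((1 − ρ)·f_min)]^d · vol(X) / C` where `C = π^{d/2}/Γ(d/2 + 1)`. -/
theorem bpgrad_convergence_within_finite_samples
    {d T : ℕ} (hd : 1 ≤ d) (hT : 1 ≤ T)
    (L ρ : ℝ) (hL : 0 < L) (hρ0 : 0 ≤ ρ) (hρ1 : ρ < 1)
    (X : Set (EuclideanSpace ℝ (Fin d))) (hXm : MeasurableSet X)
    (hXfin : volume X ≠ ⊤)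
    (f : EuclideanSpace ℝ (Fin d) → ℝ) (hf0 : ∀ x, 0 ≤ f x)
    (x : ℕ → EuclideanSpace ℝ (Fin d)) (hxX : ∀ t, 1 ≤ t → t ≤ T → x t ∈ X)
    (hrule : ∀ t, ∀ ht : 1 ≤ t, t ≤ T - 1 → ∀ i, 1 ≤ i → i ≤ t →
      f (x i) - L * ‖x i - x (t + 1)‖ ≤
        ρ * ((Finset.Icc 1 t).inf' (Finset.nonempty_Icc.mpr ht) fun k => f (x k)))
    (fmin : ℝ)
    (hfmin : fmin = (Finset.Icc 1 T).inf' (Finset.nonempty_Icc.mpr hT) fun i => f (x i))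
    (hfminpos : 0 < fmin)
    (hball : ∀ t, 1 ≤ t → t ≤ T →
      Metric.ball (x t) ((1 - ρ) * fmin / (2 * L)) ⊆ X)
    (C : ℝ) (hC : C = Real.pi ^ ((d : ℝ) / 2) / Real.Gamma ((d : ℝ) / 2 + 1)) :
    (T : ℝ) ≤ (2 * L / ((1 - ρ) * fmin)) ^ d * (volume X).toReal / C := by
  have : Nonempty (Fin d) := Fin.pos_iff_nonempty.mp hd
  simpa only [hC, finrank_euclideanSpace, measureReal_ball_zero_one_euclideanSpace,
    Fintype.card_fin, ← measureReal_def] using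
    bpgrad_convergence_within_finite_samples_general volume hT hL hρ1 hXfin
      (fun t ht htT ↦ hrule t ht (Nat.le_sub_one_of_lt htT)) hfmin hfminpos
      fun t ht ↦ hball t (Finset.mem_Icc.mp ht).1 (Finset.mem_Icc.mp ht).2
end

section
/- (Theorem 3, Global Property Preservation.) Let f : ℝ^d → ℝ be Lipschitz continuous with constant L > 0 and nonnegative, let x_1, …, x_t ∈ ℝ^d, let 0 ≤ ρ < 1, and set m = min_{i=1,…,t} f(x_i). Suppose f is differentiable at x_t with gradient ∇f(x_t) ≠ 0, and define the normalized gradient ∇f̃(x_t) = ∇f(x_t)/‖∇f(x_t)‖, the step size η_t = (f(x_t) − ρ·m)/L, and the update x_{t+1} = x_t − η_t·∇f̃(x_t). If ⟨x_i − x_t, ∇f̃(x_t)⟩ ≥ (f(x_i) − f(x_t))/L for every i = 1, …, t, then x_{t+1} satisfies the sampling rule: max_{i=1,…,t} { f(x_i) − L·‖x_i − x_{t+1}‖ } ≤ ρ·m, i.e., ‖x_i − x_{t+1}‖ ≥ (f(x_i) − ρ·m)/L for every i = 1, …, t. -/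
open scoped RealInnerProductSpace

/-!
A step of length `η` against a unit vector `u` raises the `u`-component of the displacement to every
other point by `η`, and a norm dominates each component. For `η = (f z - c) / L`, a `u`-component of
at least `(f y - f z) / L` before the step thus telescopes to a distance of at least `(f y - c) / L`
after it.
-/

section InnerProductSpace

variable {E : Type*} [NormedAddCommGroup E] [InnerProductSpace ℝ E] {u : E}

theorem inner_sub_sub_smul_self_of_norm_eq_one (hu : ‖u‖ = 1) (y z : E) (η : ℝ) :
    ⟪y - (z - η • u), u⟫ = ⟪y - z, u⟫ + η := by
  rw [← sub_add, inner_add_left, real_inner_smul_left, inner_self_eq_one_of_norm_eq_one hu, mul_one]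

theorem inner_sub_add_le_norm_sub_sub_smul (hu : ‖u‖ = 1) (y z : E) (η : ℝ) :
    ⟪y - z, u⟫ + η ≤ ‖y - (z - η • u)‖ := by
  calc
    ⟪y - z, u⟫ + η = ⟪y - (z - η • u), u⟫ :=
      (inner_sub_sub_smul_self_of_norm_eq_one hu y z η).symm
    _ ≤ ‖y - (z - η • u)‖ * ‖u‖ := real_inner_le_norm _ _
    _ = ‖y - (z - η • u)‖ := by rw [hu, mul_one]

theorem bpgrad_global_property_preservation_general (hu : ‖u‖ = 1) (f : E → ℝ) {L : ℝ}
    (hL : 0 < L) {y z : E} (hyz : f y - f z ≤ L * ⟪y - z, u⟫) (c : ℝ) :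
    f y - L * ‖y - (z - ((f z - c) / L) • u)‖ ≤ c := by
  rw [sub_le_comm]
  calc
    f y - c = (f y - f z) + (f z - c) := (sub_add_sub_cancel _ _ _).symm
    _ ≤ L * ⟪y - z, u⟫ + (f z - c) := by gcongr
    _ = L * (⟪y - z, u⟫ + (f z - c) / L) := by rw [mul_add, mul_div_cancel₀ _ hL.ne']
    _ ≤ L * ‖y - (z - ((f z - c) / L) • u)‖ := by
      gcongr
      exact inner_sub_add_le_norm_sub_sub_smul hu y z _

end InnerProductSpace

/-- Theorem 3, Global Property Preservation: Let `f : ℝ^d → ℝ` be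
Lipschitz with constant `L > 0` and nonnegative, samples `x_1, …, x_t` (1-indexed),
`0 ≤ ρ < 1`, `m = min_{i=1,…,t} f(x_i)`. Suppose `f` has gradient `g ≠ 0` at `x_t`,
let `g̃ = g/‖g‖`, `η_t = (f(x_t) − ρ·m)/L`, and `x_{t+1} = x_t − η_t·g̃`. If
`⟨x_i − x_t, g̃⟩ ≥ (f(x_i) − f(x_t))/L` for every `i = 1, …, t`, then the sampling
rule holds: `‖x_i − x_{t+1}‖ ≥ (f(x_i) − ρ·m)/L` for every `i = 1, …, t`. -/
theorem bpgrad_global_property_preservation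
    {d : ℕ} (f : EuclideanSpace ℝ (Fin d) → ℝ) (L : ℝ) (hL : 0 < L)
    (hf : ∀ x y : EuclideanSpace ℝ (Fin d), |f x - f y| ≤ L * ‖x - y‖)
    (hf0 : ∀ x, 0 ≤ f x)
    (t : ℕ) (ht : 1 ≤ t) (x : ℕ → EuclideanSpace ℝ (Fin d))
    (ρ : ℝ) (hρ0 : 0 ≤ ρ) (hρ1 : ρ < 1)
    (m : ℝ) (hm : m = (Finset.Icc 1 t).inf' (Finset.nonempty_Icc.mpr ht) fun i => f (x i))
    (g : EuclideanSpace ℝ (Fin d)) (hgrad : HasGradientAt f g (x t)) (hg0 : g ≠ 0)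
    (gt : EuclideanSpace ℝ (Fin d)) (hgt : gt = ‖g‖⁻¹ • g)
    (η : ℝ) (hη : η = (f (x t) - ρ * m) / L)
    (hcond : ∀ i, 1 ≤ i → i ≤ t → (f (x i) - f (x t)) / L ≤ ⟪x i - x t, gt⟫) :
    ∀ i, 1 ≤ i → i ≤ t → (f (x i) - ρ * m) / L ≤ ‖x i - (x t - η • gt)‖ := by
  subst hgt hη
  intro i hi hit
  rw [div_le_iff₀' hL, sub_le_comm]
  exact bpgrad_global_property_preservation_general (norm_smul_inv_norm (𝕜 := ℝ) hg0) f hL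
    ((div_le_iff₀' hL).mp (hcond i hi hit)) (ρ * m)
end

section
/- (Full-sequence sampling-rule preservation of the BPGrad solver.) Let f : ℝ^d → ℝ be Lipschitz continuous with constant L > 0 and nonnegative, let 0 ≤ ρ < 1, and let x_1, x_2, …, x_T ∈ ℝ^d be generated iteratively by x_{t+1} = x_t − η_t·∇f̃(x_t), where f is differentiable at each x_t with ∇f(x_t) ≠ 0, ∇f̃(x_t) = ∇f(x_t)/‖∇f(x_t)‖, and η_t = (f(x_t) − ρ·min_{i=1,…,t} f(x_i))/L. If at every step t (1 ≤ t ≤ T − 1) the condition ⟨x_i − x_t, ∇f̃(x_t)⟩ ≥ (f(x_i) − f(x_t))/L holds for all i = 1, …, t, then the whole sequence satisfies the sampling rule: for every t with 1 ≤ t ≤ T − 1 and every i = 1, …, t, ‖x_i − x_{t+1}‖ ≥ (f(x_i) − ρ·min_{k=1,…,t} f(x_k))/L. -/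
open scoped RealInnerProductSpace

section InnerProductSpace

variable {E : Type*} [NormedAddCommGroup E] [InnerProductSpace ℝ E]

theorem real_inner_sub_add_le_norm_sub_sub_smul {u : E} (hu : ‖u‖ = 1) (x y : E) (η : ℝ) :
    ⟪y - x, u⟫ + η ≤ ‖y - (x - η • u)‖ :=
  calc ⟪y - x, u⟫ + η = ⟪y - (x - η • u), u⟫ := by
        rw [← sub_add, inner_add_left, real_inner_smul_left, real_inner_self_eq_norm_sq, hu,
          one_pow, mul_one]
    _ ≤ ‖y - (x - η • u)‖ * ‖u‖ := real_inner_le_norm _ _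
    _ = ‖y - (x - η • u)‖ := by rw [hu, mul_one]

/-- In the BPGrad solver `κ = 1 / L` and `u t` is the normalized gradient at `x t`. -/
theorem bpgrad_full_sequence_sampling_rule_general {T : ℕ} (f : E → ℝ) (κ ρ : ℝ) (x u : ℕ → E)
    (hu : ∀ t, 1 ≤ t → t ≤ T - 1 → ‖u t‖ = 1)
    (hiter : ∀ t, ∀ ht : 1 ≤ t, t ≤ T - 1 →
      x (t + 1) = x t -
        (κ * (f (x t) - ρ * ((Finset.Icc 1 t).inf' (Finset.nonempty_Icc.mpr ht)
            fun k => f (x k)))) • u t)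
    (hcond : ∀ t, 1 ≤ t → t ≤ T - 1 → ∀ i, 1 ≤ i → i ≤ t →
      κ * (f (x i) - f (x t)) ≤ ⟪x i - x t, u t⟫) :
    ∀ t, ∀ ht : 1 ≤ t, t ≤ T - 1 → ∀ i, 1 ≤ i → i ≤ t →
      κ * (f (x i) - ρ * ((Finset.Icc 1 t).inf' (Finset.nonempty_Icc.mpr ht)
          fun k => f (x k))) ≤ ‖x i - x (t + 1)‖ := by
  intro t ht htT i hi hit
  rw [hiter t ht htT]
  set m := (Finset.Icc 1 t).inf' (Finset.nonempty_Icc.mpr ht) fun k => f (x k)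
  calc κ * (f (x i) - ρ * m)
      = κ * (f (x i) - f (x t)) + κ * (f (x t) - ρ * m) := by ring
    _ ≤ ⟪x i - x t, u t⟫ + κ * (f (x t) - ρ * m) := by gcongr; exact hcond t ht htT i hi hit
    _ ≤ ‖x i - (x t - (κ * (f (x t) - ρ * m)) • u t)‖ :=
        real_inner_sub_add_le_norm_sub_sub_smul (hu t ht htT) _ _ _

end InnerProductSpace

/-- Full-sequence sampling-rule preservation of the BPGrad solver:
Let `f : ℝ^d → ℝ` be Lipschitz with constant `L > 0` and nonnegative, `0 ≤ ρ < 1`,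
and let `x_1, …, x_T` (1-indexed) be generated iteratively by
`x_{t+1} = x_t − η_t·g̃_t`, where `f` has nonzero gradient `g_t` at `x_t`,
`g̃_t = g_t/‖g_t‖`, and `η_t = (f(x_t) − ρ·min_{k=1,…,t} f(x_k))/L`. If at every
step `1 ≤ t ≤ T − 1` the condition `⟨x_i − x_t, g̃_t⟩ ≥ (f(x_i) − f(x_t))/L` holds
for all `i = 1, …, t`, then the whole sequence satisfies the sampling rule: for
every `1 ≤ t ≤ T − 1` and every `i = 1, …, t`,
`‖x_i − x_{t+1}‖ ≥ (f(x_i) − ρ·min_{k=1,…,t} f(x_k))/L`. -/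
theorem bpgrad_full_sequence_sampling_rule
    {d T : ℕ} (f : EuclideanSpace ℝ (Fin d) → ℝ) (L : ℝ) (hL : 0 < L)
    (hf : ∀ x y : EuclideanSpace ℝ (Fin d), |f x - f y| ≤ L * ‖x - y‖)
    (hf0 : ∀ x, 0 ≤ f x)
    (ρ : ℝ) (hρ0 : 0 ≤ ρ) (hρ1 : ρ < 1)
    (x g : ℕ → EuclideanSpace ℝ (Fin d))
    (hgrad : ∀ t, 1 ≤ t → t ≤ T - 1 → HasGradientAt f (g t) (x t))
    (hg0 : ∀ t, 1 ≤ t → t ≤ T - 1 → g t ≠ 0)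
    (hiter : ∀ t, ∀ ht : 1 ≤ t, t ≤ T - 1 →
      x (t + 1) = x t -
        (((f (x t) - ρ * ((Finset.Icc 1 t).inf' (Finset.nonempty_Icc.mpr ht)
            fun k => f (x k))) / L) • (‖g t‖⁻¹ • g t)))
    (hcond : ∀ t, 1 ≤ t → t ≤ T - 1 → ∀ i, 1 ≤ i → i ≤ t →
      (f (x i) - f (x t)) / L ≤ ⟪x i - x t, ‖g t‖⁻¹ • g t⟫) :
    ∀ t, ∀ ht : 1 ≤ t, t ≤ T - 1 → ∀ i, 1 ≤ i → i ≤ t →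
      (f (x i) - ρ * ((Finset.Icc 1 t).inf' (Finset.nonempty_Icc.mpr ht)
          fun k => f (x k))) / L ≤ ‖x i - x (t + 1)‖ := by
  simp only [div_eq_inv_mul] at hiter hcond ⊢
  exact bpgrad_full_sequence_sampling_rule_general f L⁻¹ ρ x (fun t => ‖g t‖⁻¹ • g t)
    (fun t ht htT => NormedSpace.norm_normalize (hg0 t ht htT)) hiter hcond
end

section
/- (Finite length of BPGrad solver trajectories.) Let d ≥ 1, L > 0, 0 ≤ ρ < 1, let X ⊆ ℝ^d be a measurable set of finite Lebesgue volume V_X, and let f : ℝ^d → ℝ be Lipschitz continuous with constant L and nonnegative. Suppose x_1, …, x_T ∈ X are generated by x_{t+1} = x_t − η_t·∇f̃(x_t) with η_t = (f(x_t) − ρ·min_{i=1,…,t} f(x_i))/L, where f is differentiable with ∇f(x_t) ≠ 0 at each x_t, and at every step t the condition ⟨x_i − x_t, ∇f̃(x_t)⟩ ≥ (f(x_i) − f(x_t))/L holds for all i ≤ t. Set f_min = min_{i=1,…,T} f(x_i), assume f_min > 0, and assume the open ball B(x_t, (1−ρ)·f_min/(2L)) is contained in X for each t. Then T ≤ [2L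 / ((1 − ρ)·f_min)]^d · V_X / C, where C = π^{d/2} / Γ(d/2 + 1). -/
open MeasureTheory
open scoped RealInnerProductSpace

/-!
The inner product condition places every earlier iterate `x i` at signed height at least
`(f (x i) - f (x t)) / L` above `x t` in the unit direction `u t` of the step, while the step
itself moves down by `(f (x t) - ρ * min) / L` in that direction. The heights add up, the terms
`f (x t)` cancel, and `x (t + 1)` is at distance at least `(1 - ρ) * m / L` from all earlier
iterates as soon as `m ≤ f` along the trajectory. The balls of half that radius are therefore
disjoint, and comparing volumes bounds their number.
-/

open Metric Module

section Packing

variable {E : Type*} [NormedAddCommGroup E] [NormedSpace ℝ E] [FiniteDimensional ℝ E]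
  [MeasurableSpace E] [BorelSpace E] (μ : Measure E) [μ.IsAddHaarMeasure]

theorem measureReal_ball_eq_pow_finrank_mul (x : E) {r : ℝ} (hr : 0 < r) :
    μ.real (ball x r) = r ^ finrank ℝ E * μ.real (ball 0 1) := by
  rw [measureReal_def, Measure.addHaar_ball_of_pos μ x hr, ENNReal.toReal_mul,
    ENNReal.toReal_ofReal (by positivity), measureReal_def]

theorem card_le_inv_pow_finrank_mul_measureReal_div {ι : Type*} {s : Finset ι} {x : ι → E}
    {r : ℝ} (hr : 0 < r) (hsep : (s : Set ι).Pairwise fun i j ↦ 2 * r ≤ dist (x i) (x j))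
    {X : Set E} (hX : μ X ≠ ⊤) (hball : ∀ i ∈ s, ball (x i) r ⊆ X) :
    (s.card : ℝ) ≤ r⁻¹ ^ finrank ℝ E * μ.real X / μ.real (ball 0 1) := by
  have disjoint_balls : (s : Set ι).PairwiseDisjoint fun i ↦ ball (x i) r :=
    hsep.imp_on fun _ _ _ _ _ h ↦ ball_disjoint_ball (by rwa [← two_mul])
  have unitBall_pos : 0 < μ.real (ball (0 : E) 1) :=
    ENNReal.toReal_pos (measure_ball_pos μ 0 one_pos).ne' measure_ball_lt_top.ne
  have volume_balls_le : s.card * (r ^ finrank ℝ E * μ.real (ball 0 1)) ≤ μ.real X :=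
    calc s.card * (r ^ finrank ℝ E * μ.real (ball 0 1))
        = ∑ i ∈ s, μ.real (ball (x i) r) := by
          simp [measureReal_ball_eq_pow_finrank_mul μ _ hr]
      _ = μ.real (⋃ i ∈ s, ball (x i) r) :=
          (measureReal_biUnion_finset disjoint_balls (fun _ _ ↦ measurableSet_ball)
            fun _ _ ↦ measure_ball_lt_top.ne).symm
      _ ≤ μ.real X := measureReal_mono (Set.iUnion₂_subset hball) hX
  rw [le_div_iff₀ unitBall_pos, inv_pow, ← div_eq_inv_mul, le_div_iff₀ (by positivity)]
  linarith

end Packing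

theorem volume_real_unitBall (E : Type*) [NormedAddCommGroup E] [InnerProductSpace ℝ E]
    [FiniteDimensional ℝ E] [MeasurableSpace E] [BorelSpace E] [Nontrivial E] :
    volume.real (ball (0 : E) 1) =
      Real.pi ^ ((finrank ℝ E : ℝ) / 2) / Real.Gamma ((finrank ℝ E : ℝ) / 2 + 1) := by
  rw [measureReal_def, InnerProductSpace.volume_ball, ENNReal.ofReal_one, one_pow, one_mul,
    ENNReal.toReal_ofReal (by positivity), Real.rpow_div_two_eq_sqrt _ Real.pi_pos.le,
    Real.rpow_natCast]

section Separation

variable {E : Type*} [NormedAddCommGroup E] [InnerProductSpace ℝ E]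

theorem add_le_dist_sub_smul_of_le_inner {y p u : E} {c η : ℝ} (hu : ‖u‖ = 1)
    (hc : c ≤ ⟪y - p, u⟫) : c + η ≤ dist y (p - η • u) :=
  calc c + η ≤ ⟪y - p, u⟫ + η := by gcongr
    _ = ⟪y - (p - η • u), u⟫ := by
      rw [sub_sub_eq_add_sub, add_sub_right_comm, inner_add_left, real_inner_smul_left,
        real_inner_self_eq_norm_sq, hu, one_pow, mul_one]
    _ ≤ ‖y - (p - η • u)‖ * ‖u‖ := real_inner_le_norm _ _
    _ = dist y (p - η • u) := by rw [hu, mul_one, dist_eq_norm]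

theorem le_dist_bpgrad_step {f : E → ℝ} {y p u : E} {L ρ m b : ℝ} (hL : 0 ≤ L) (hρ0 : 0 ≤ ρ)
    (hρ1 : ρ ≤ 1) (hu : ‖u‖ = 1) (hcond : (f y - f p) / L ≤ ⟪y - p, u⟫)
    (hm : m ≤ f y) (hb : b ≤ f y) :
    (1 - ρ) * m / L ≤ dist y (p - ((f p - ρ * b) / L) • u) :=
  calc (1 - ρ) * m / L ≤ ((1 - ρ) * f y + ρ * (f y - b)) / L := by
        have := mul_le_mul_of_nonneg_left hm (sub_nonneg.mpr hρ1)
        have := mul_nonneg hρ0 (sub_nonneg.mpr hb)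
        gcongr
        linarith
    _ = (f y - f p) / L + (f p - ρ * b) / L := by ring
    _ ≤ dist y (p - ((f p - ρ * b) / L) • u) := add_le_dist_sub_smul_of_le_inner hu hcond

theorem pairwise_le_dist_bpgrad {f : E → ℝ} {x u : ℕ → E} {T : ℕ} {L ρ m : ℝ} (hL : 0 ≤ L)
    (hρ0 : 0 ≤ ρ) (hρ1 : ρ ≤ 1) (hu : ∀ t, 1 ≤ t → t < T → ‖u t‖ = 1)
    (hiter : ∀ t, ∀ ht : 1 ≤ t, t < T →
      x (t + 1) = x t -
        ((f (x t) - ρ * ((Finset.Icc 1 t).inf' (Finset.nonempty_Icc.mpr ht)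
            fun k ↦ f (x k))) / L) • u t)
    (hcond : ∀ t, 1 ≤ t → t < T → ∀ i, 1 ≤ i → i ≤ t →
      (f (x i) - f (x t)) / L ≤ ⟪x i - x t, u t⟫)
    (hm : ∀ t, 1 ≤ t → t ≤ T → m ≤ f (x t)) :
    (Finset.Icc 1 T : Set ℕ).Pairwise fun i j ↦ (1 - ρ) * m / L ≤ dist (x i) (x j) := by
  intro i hi j hj hij
  wlog hlt : i < j generalizing i j
  · rw [dist_comm]
    exact this hj hi hij.symm (by omega)
  obtain ⟨t, rfl⟩ : ∃ t, j = t + 1 := ⟨j - 1, by omega⟩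
  have one_le_i : 1 ≤ i := (Finset.mem_Icc.mp hi).1
  have i_le_t : i ≤ t := Nat.lt_succ_iff.mp hlt
  have one_le_t : 1 ≤ t := one_le_i.trans i_le_t
  have t_lt : t < T := (Finset.mem_Icc.mp hj).2
  rw [hiter t one_le_t t_lt]
  exact le_dist_bpgrad_step hL hρ0 hρ1 (hu t one_le_t t_lt)
    (hcond t one_le_t t_lt i one_le_i i_le_t) (hm i one_le_i (i_le_t.trans t_lt.le))
    (Finset.inf'_le (fun k ↦ f (x k)) (Finset.mem_Icc.mpr ⟨one_le_i, i_le_t⟩))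

end Separation

theorem bpgrad_solver_finite_trajectory_general {E : Type*} [NormedAddCommGroup E]
    [InnerProductSpace ℝ E] [FiniteDimensional ℝ E] [MeasurableSpace E] [BorelSpace E]
    (μ : Measure E) [μ.IsAddHaarMeasure] {T : ℕ} {L ρ m : ℝ} (hL : 0 < L) (hρ0 : 0 ≤ ρ)
    (hρ1 : ρ < 1) {X : Set E} (hX : μ X ≠ ⊤) {f : E → ℝ} {x u : ℕ → E}
    (hu : ∀ t, 1 ≤ t → t < T → ‖u t‖ = 1)
    (hiter : ∀ t, ∀ ht : 1 ≤ t, t < T →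
      x (t + 1) = x t -
        ((f (x t) - ρ * ((Finset.Icc 1 t).inf' (Finset.nonempty_Icc.mpr ht)
            fun k ↦ f (x k))) / L) • u t)
    (hcond : ∀ t, 1 ≤ t → t < T → ∀ i, 1 ≤ i → i ≤ t →
      (f (x i) - f (x t)) / L ≤ ⟪x i - x t, u t⟫)
    (hm0 : 0 < m) (hm : ∀ t, 1 ≤ t → t ≤ T → m ≤ f (x t))
    (hball : ∀ t, 1 ≤ t → t ≤ T → ball (x t) ((1 - ρ) * m / (2 * L)) ⊆ X) :
    (T : ℝ) ≤ (2 * L / ((1 - ρ) * m)) ^ finrank ℝ E * μ.real X / μ.real (ball 0 1) := by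
  have one_sub_pos : 0 < 1 - ρ := sub_pos.mpr hρ1
  have two_mul_radius : 2 * ((1 - ρ) * m / (2 * L)) = (1 - ρ) * m / L := by field_simp
  have separated := pairwise_le_dist_bpgrad hL.le hρ0 hρ1.le hu hiter hcond hm
  have card_le := card_le_inv_pow_finrank_mul_measureReal_div μ (by positivity)
    (two_mul_radius ▸ separated) hX fun t ht ↦
      hball t (Finset.mem_Icc.mp ht).1 (Finset.mem_Icc.mp ht).2
  rwa [Nat.card_Icc, Nat.add_sub_cancel, inv_div] at card_le

/-- Finite length of BPGrad solver trajectories: Let `d ≥ 1`,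
`L > 0`, `0 ≤ ρ < 1`, `X ⊆ ℝ^d` measurable of finite Lebesgue volume, and
`f : ℝ^d → ℝ` Lipschitz with constant `L` and nonnegative. Suppose
`x_1, …, x_T ∈ X` (1-indexed) are generated by `x_{t+1} = x_t − η_t·g̃_t` with
`η_t = (f(x_t) − ρ·min_{k=1,…,t} f(x_k))/L`, where `f` has nonzero gradient `g_t`
at each `x_t` and at every step `t` the condition
`⟨x_i − x_t, g̃_t⟩ ≥ (f(x_i) − f(x_t))/L` holds for all `i ≤ t`. With
`f_min = min_{i=1,…,T} f(x_i) > 0` and `B(x_t, (1−ρ)·f_min/(2L)) ⊆ X` for each `t`,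
one has `T ≤ [2L/((1 − ρ)·f_min)]^d · vol(X) / C` where `C = π^{d/2}/Γ(d/2 + 1)`. -/
theorem bpgrad_solver_finite_trajectory
    {d T : ℕ} (hd : 1 ≤ d) (hT : 1 ≤ T)
    (L ρ : ℝ) (hL : 0 < L) (hρ0 : 0 ≤ ρ) (hρ1 : ρ < 1)
    (X : Set (EuclideanSpace ℝ (Fin d))) (hXm : MeasurableSet X)
    (hXfin : volume X ≠ ⊤)
    (f : EuclideanSpace ℝ (Fin d) → ℝ)
    (hf : ∀ x y : EuclideanSpace ℝ (Fin d), |f x - f y| ≤ L * ‖x - y‖)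
    (hf0 : ∀ x, 0 ≤ f x)
    (x g : ℕ → EuclideanSpace ℝ (Fin d))
    (hxX : ∀ t, 1 ≤ t → t ≤ T → x t ∈ X)
    (hgrad : ∀ t, 1 ≤ t → t ≤ T - 1 → HasGradientAt f (g t) (x t))
    (hg0 : ∀ t, 1 ≤ t → t ≤ T - 1 → g t ≠ 0)
    (hiter : ∀ t, ∀ ht : 1 ≤ t, t ≤ T - 1 →
      x (t + 1) = x t -
        (((f (x t) - ρ * ((Finset.Icc 1 t).inf' (Finset.nonempty_Icc.mpr ht)
            fun k => f (x k))) / L) • (‖g t‖⁻¹ • g t)))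
    (hcond : ∀ t, 1 ≤ t → t ≤ T - 1 → ∀ i, 1 ≤ i → i ≤ t →
      (f (x i) - f (x t)) / L ≤ ⟪x i - x t, ‖g t‖⁻¹ • g t⟫)
    (fmin : ℝ)
    (hfmin : fmin = (Finset.Icc 1 T).inf' (Finset.nonempty_Icc.mpr hT) fun i => f (x i))
    (hfminpos : 0 < fmin)
    (hball : ∀ t, 1 ≤ t → t ≤ T →
      Metric.ball (x t) ((1 - ρ) * fmin / (2 * L)) ⊆ X)
    (C : ℝ) (hC : C = Real.pi ^ ((d : ℝ) / 2) / Real.Gamma ((d : ℝ) / 2 + 1)) :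
    (T : ℝ) ≤ (2 * L / ((1 - ρ) * fmin)) ^ d * (volume X).toReal / C := by
  have : Nonempty (Fin d) := ⟨⟨0, hd⟩⟩
  have bound := bpgrad_solver_finite_trajectory_general volume hL hρ0 hρ1 hXfin
    (fun t ht htT ↦ norm_smul_inv_norm (𝕜 := ℝ) (hg0 t ht (Nat.le_sub_one_of_lt htT)))
    (fun t ht htT ↦ hiter t ht (Nat.le_sub_one_of_lt htT))
    (fun t ht htT ↦ hcond t ht (Nat.le_sub_one_of_lt htT)) hfminpos
    (fun t ht htT ↦ hfmin ▸ Finset.inf'_le (fun i ↦ f (x i)) (Finset.mem_Icc.mpr ⟨ht, htT⟩)) hball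
  rwa [volume_real_unitBall, finrank_euclideanSpace_fin, ← hC] at bound
end
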